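/- Let 𝔥 be a separable, infinite dimensional complex Hilbert space and ψ a unit vector in 𝔥, and let d_ψ(p,q) := ⟨pψ, qψ⟩ for projections p,q on 𝔥. Then there is NO trace class operator 𝔛 on 𝔥 ⊗ 𝔥 such that d_ψ(p,q) = tr((p ⊗ q)𝔛) for all projections p,q on 𝔥; equivalently, d_ψ is not tensor bounded. -/

import Mathlib

/- Common background definitions: decoherence functionals on the projection
lattice of a complex Hilbert space, boundedness/additivity notions, trace class
operators, and an axiomatisation of the Hilbert space tensor product
`𝔥 ⊗ 𝔥` together with the operator tensor product. -/

noncomputable section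

open scoped ComplexInnerProductSpace ComplexOrder
open ContinuousLinearMap

universe u

variable {E : Type u} [NormedAddCommGroup E] [InnerProductSpace ℂ E] [CompleteSpace E]
variable {G : Type u} [NormedAddCommGroup G] [InnerProductSpace ℂ G] [CompleteSpace G]

/-- `p` is an orthogonal projection on a Hilbert space. -/
def IsOrthoProj (p : E →L[ℂ] E) : Prop :=
  IsIdempotentElem p ∧ IsSelfAdjoint p

/-- `p` is an operator of finite rank. -/
def HasFiniteRank (p : E →L[ℂ] E) : Prop :=
  FiniteDimensional ℂ ↥(LinearMap.range (p : E →ₗ[ℂ] E))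

/-- A decoherence functional on the lattice of projections `P(𝔥)`
(modelled as a function on all pairs of bounded operators whose defining
properties refer only to its values at pairs of orthogonal projections). -/
structure IsDecoherenceFunctional (d : (E →L[ℂ] E) → (E →L[ℂ] E) → ℂ) : Prop where
  hermitian : ∀ p q, IsOrthoProj p → IsOrthoProj q → d p q = starRingEnd ℂ (d q p)
  pos : ∀ p, IsOrthoProj p → 0 ≤ d p p
  normalized : d 1 1 = 1
  orthoadd : ∀ p₁ p₂ q, IsOrthoProj p₁ → IsOrthoProj p₂ → IsOrthoProj q →
    p₁ * p₂ = 0 → d (p₁ + p₂) q = d p₁ q + d p₂ q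

/-- A decoherence functional is bounded if `{|d(p,q)|}` is a bounded set. -/
def DFBounded (d : (E →L[ℂ] E) → (E →L[ℂ] E) → ℂ) : Prop :=
  ∃ C : ℝ, ∀ p q, IsOrthoProj p → IsOrthoProj q → ‖d p q‖ ≤ C

/-- Countable additivity of a decoherence functional: for every countable
pairwise orthogonal family of projections summing (strongly) to `P`,
`d (P, q) = ∑ d (pᵢ, q)`. -/
def DFCountablyAdditive (d : (E →L[ℂ] E) → (E →L[ℂ] E) → ℂ) : Prop :=
  ∀ (p : ℕ → E →L[ℂ] E) (P q : E →L[ℂ] E),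
    (∀ i, IsOrthoProj (p i)) → IsOrthoProj P → IsOrthoProj q →
    (∀ i j, i ≠ j → p i * p j = 0) →
    (∀ x : E, HasSum (fun i => p i x) (P x)) →
    HasSum (fun i => d (p i) q) (d P q)

/-- Complete additivity of a decoherence functional. -/
def DFCompletelyAdditive (d : (E →L[ℂ] E) → (E →L[ℂ] E) → ℂ) : Prop :=
  ∀ (ι : Type u) (p : ι → E →L[ℂ] E) (P q : E →L[ℂ] E),
    (∀ i, IsOrthoProj (p i)) → IsOrthoProj P → IsOrthoProj q →
    (∀ i j, i ≠ j → p i * p j = 0) →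
    (∀ x : E, HasSum (fun i => p i x) (P x)) →
    HasSum (fun i => d (p i) q) (d P q)

/-- A bilinear form `D` on `B(𝔥) × B(𝔥)` is bounded. -/
def IsBoundedBilinear (D : (E →L[ℂ] E) →ₗ[ℂ] (E →L[ℂ] E) →ₗ[ℂ] ℂ) : Prop :=
  ∃ C : ℝ, ∀ x y : E →L[ℂ] E, ‖D x y‖ ≤ C * ‖x‖ * ‖y‖

/-- The bilinear form `D` extends the decoherence functional `d`. -/
def ExtendsDF (D : (E →L[ℂ] E) →ₗ[ℂ] (E →L[ℂ] E) →ₗ[ℂ] ℂ)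
    (d : (E →L[ℂ] E) → (E →L[ℂ] E) → ℂ) : Prop :=
  ∀ p q, IsOrthoProj p → IsOrthoProj q → D p q = d p q

/-- `T` is a trace class operator (via the standard characterisation: the sums
`∑ |⟪eᵢ, T fᵢ⟫|` over finite orthonormal families are uniformly bounded). -/
def IsTraceClass (T : E →L[ℂ] E) : Prop :=
  ∃ C : ℝ, ∀ (n : ℕ) (e f : Fin n → E), Orthonormal ℂ e → Orthonormal ℂ f →
    ∑ i, ‖⟪e i, T (f i)⟫‖ ≤ C

/-- The trace of an operator computed in the Hilbert basis `b` (for a trace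
class operator this is basis independent and is the usual trace). -/
def traceAlong {ι : Type*} (b : HilbertBasis ι ℂ E) (T : E →L[ℂ] E) : ℂ :=
  ∑' i, ⟪b i, T (b i)⟫

/-- The rank one orthogonal projection `p_ξ` onto the span of a unit vector `ξ`. -/
def rankOneProj (ξ : E) : E →L[ℂ] E :=
  (innerSL ℂ ξ).smulRight ξ

/-- An axiomatisation of the Hilbert space tensor product `G = E ⊗ E`:
a bilinear map `tmul` into `G` multiplying inner products and having dense span. -/
structure HilbertTensorProduct (E G : Type u) [NormedAddCommGroup E]
    [InnerProductSpace ℂ E] [NormedAddCommGroup G] [InnerProductSpace ℂ G] :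
    Type u where
  tmul : E →ₗ[ℂ] E →ₗ[ℂ] G
  inner_tmul : ∀ a b c d : E, ⟪tmul a b, tmul c d⟫ = ⟪a, c⟫ * ⟪b, d⟫
  dense_span : Dense (↑(Submodule.span ℂ (Set.range fun z : E × E => tmul z.1 z.2)) : Set G)

/-- The algebraic tensor product `E ⊗_alg E`, viewed as a (dense) subspace of `G`. -/
def HilbertTensorProduct.algSpan (J : HilbertTensorProduct E G) : Submodule ℂ G :=
  Submodule.span ℂ (Set.range fun z : E × E => J.tmul z.1 z.2)

/-- The Hilbert space tensor product together with the operator tensor product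
`(x, y) ↦ x ⊗ y` on bounded operators. -/
structure OperatorTensor (E G : Type u) [NormedAddCommGroup E]
    [InnerProductSpace ℂ E] [NormedAddCommGroup G] [InnerProductSpace ℂ G]
    extends HilbertTensorProduct E G where
  op : (E →L[ℂ] E) → (E →L[ℂ] E) → (G →L[ℂ] G)
  op_tmul : ∀ (x y : E →L[ℂ] E) (a b : E), op x y (tmul a b) = tmul (x a) (y b)

/-- The algebraic tensor product `K(𝔥) • K(𝔥)`: the span in `B(G)` of the
operators `x ⊗ y` with `x, y` compact. -/
def OperatorTensor.compactSpan (J : OperatorTensor E G) : Submodule ℂ (G →L[ℂ] G) :=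
  Submodule.span ℂ {T | ∃ x y : E →L[ℂ] E,
    IsCompactOperator (⇑x) ∧ IsCompactOperator (⇑y) ∧ T = J.op x y}

/-- `β` is the linear functional on `K(𝔥) • K(𝔥)` induced by the bilinear form
`D`, i.e. `β (x ⊗ y) = D (x, y)` for compact `x, y`. -/
def IsBetaFor (J : OperatorTensor E G)
    (D : (E →L[ℂ] E) →ₗ[ℂ] (E →L[ℂ] E) →ₗ[ℂ] ℂ)
    (β : ↥J.compactSpan →ₗ[ℂ] ℂ) : Prop :=
  ∀ x y : E →L[ℂ] E, IsCompactOperator (⇑x) → IsCompactOperator (⇑y) →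
    ∀ hm : J.op x y ∈ J.compactSpan, β ⟨J.op x y, hm⟩ = D x y

/-- `β` is bounded for the operator norm (inherited from `B(G)`). -/
def BetaNormBounded (J : OperatorTensor E G) (β : ↥J.compactSpan →ₗ[ℂ] ℂ) : Prop :=
  ∃ C : ℝ, ∀ S : J.compactSpan, ‖β S‖ ≤ C * ‖(S : G →L[ℂ] G)‖

/-- A decoherence functional is tensor bounded if its associated functional `β`
on `K(𝔥) • K(𝔥)` is bounded for the (pre-)C*-norm. -/
def IsTensorBounded (J : OperatorTensor E G)
    (d : (E →L[ℂ] E) → (E →L[ℂ] E) → ℂ) : Prop :=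
  ∃ D, IsBoundedBilinear D ∧ ExtendsDF D d ∧
    ∃ β, IsBetaFor J D β ∧ BetaNormBounded J β

/-- `β` is uniformly bounded on the projections `p_ξ`, `ξ` a unit vector of the
algebraic tensor product `𝔥 ⊗_alg 𝔥`. -/
def BetaTraciallyBounded (J : OperatorTensor E G) (β : ↥J.compactSpan →ₗ[ℂ] ℂ) : Prop :=
  ∃ C : ℝ, ∀ ξ : G, ξ ∈ J.toHilbertTensorProduct.algSpan → ‖ξ‖ = 1 →
    ∀ hm : rankOneProj ξ ∈ J.compactSpan, ‖β ⟨rankOneProj ξ, hm⟩‖ ≤ C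

/-- A decoherence functional is tracially bounded if it is bounded and its
associated functional `β` is uniformly bounded on rank one projections `p_ξ`
with `ξ` a unit vector in `𝔥 ⊗_alg 𝔥`. -/
def IsTraciallyBounded (J : OperatorTensor E G)
    (d : (E →L[ℂ] E) → (E →L[ℂ] E) → ℂ) : Prop :=
  DFBounded d ∧ ∃ D, IsBoundedBilinear D ∧ ExtendsDF D d ∧
    ∃ β, IsBetaFor J D β ∧ BetaTraciallyBounded J β

/-!
The bilinear extension of `d_ψ` is `(x, y) ↦ ⟪ψ, y (x ψ)⟫`. By polarization, rank one projections
span all rank one operators, so a trace formula or a functional `β` known on pairs of projections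
is known on all pairs of rank one operators. For a unit vector `φ` and `e₁, …, eₙ` orthonormal,
`∑ᵢ |eᵢ⟩⟨φ| ⊗ |φ⟩⟨eᵢ| = ∑ᵢ |eᵢ ⊗ φ⟩⟨φ ⊗ eᵢ|` is a partial isometry, hence of norm at most `1`,
but each of its `n` terms contributes `|⟪φ, ψ⟫|²`. As `n` is arbitrary in infinite dimension,
neither a trace class `X` nor a bounded `β` can exist.
-/

open InnerProductSpace

section RankOne

variable {𝕜 V W ι : Type*} [RCLike 𝕜]
  [NormedAddCommGroup V] [InnerProductSpace 𝕜 V] [NormedAddCommGroup W] [InnerProductSpace 𝕜 W]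

theorem isCompactOperator_rankOne (v : V) (w : W) : IsCompactOperator (rankOne 𝕜 v w) := by
  rw [rankOne_def', ContinuousLinearMap.coe_comp]
  exact (isCompactOperator_of_locallyCompactSpace_dom (innerSL 𝕜 w)).clm_comp
    (toSpanSingleton 𝕜 v)

theorem norm_sum_rankOne_le_one [Fintype ι] {v : ι → V} {w : ι → W}
    (hv : Orthonormal 𝕜 v) (hw : Orthonormal 𝕜 w) : ‖∑ i, rankOne 𝕜 (v i) (w i)‖ ≤ 1 := by
  refine opNorm_le_bound _ zero_le_one fun z => ?_
  rw [one_mul]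
  refine le_of_sq_le_sq ?_ (norm_nonneg z)
  calc ‖(∑ i, rankOne 𝕜 (v i) (w i)) z‖ ^ 2
      = ‖∑ i, inner 𝕜 (w i) z • v i‖ ^ 2 := by simp only [sum_apply, rankOne_apply]
    _ = ∑ i, ‖inner 𝕜 (w i) z‖ ^ 2 :=
      hv.orthogonalFamily.norm_sum (fun i => inner 𝕜 (w i) z) Finset.univ
    _ ≤ ‖z‖ ^ 2 := hw.sum_inner_products_le z

theorem hasSum_inner_rankOne_mul (b : HilbertBasis ι 𝕜 V) (X : V →L[𝕜] V) (u v : V) :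
    HasSum (fun i => inner 𝕜 (b i) ((rankOne 𝕜 u v * X) (b i))) (inner 𝕜 v (X u)) := by
  have h := (b.hasSum_repr u).mapL (innerSL 𝕜 v ∘L X)
  simpa [b.repr_apply_apply, inner_smul_right, mul_comm] using h

theorem finiteDimensional_of_orthonormal_bound {r C : ℝ} (hr : 0 < r)
    (h : ∀ (n : ℕ) (e : Fin n → V), Orthonormal 𝕜 e → n * r ≤ C) : FiniteDimensional 𝕜 V := by
  by_contra hinf
  obtain ⟨n, hn⟩ := exists_nat_gt (C / r)
  have hrank : (n : Cardinal) ≤ Module.rank 𝕜 V :=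
    Cardinal.natCast_le_aleph0.trans (not_lt.mp (mt Module.rank_lt_aleph0_iff.mp hinf))
  obtain ⟨f, hf⟩ := exists_linearIndependent_of_le_rank hrank
  have hle := h n _ (gramSchmidtNormed_orthonormal hf)
  exact absurd hle (not_le.mpr ((div_lt_iff₀ hr).mp hn))

theorem exists_norm_eq_one_inner_ne_zero {v : V} (hv : v ≠ 0) :
    ∃ u : V, ‖u‖ = 1 ∧ inner 𝕜 u v ≠ 0 :=
  ⟨((‖v‖ : 𝕜)⁻¹) • v, norm_smul_inv_norm hv, by simp [inner_smul_left, hv]⟩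

end RankOne

section Polarization

variable {V M : Type*} [NormedAddCommGroup V] [InnerProductSpace ℂ V] [AddCommGroup M] [Module ℂ M]

theorem rankOne_mem_span_rankOne_self (a b : V) :
    rankOne ℂ a b ∈ Submodule.span ℂ ((fun v : V => rankOne ℂ v v) '' Metric.sphere 0 1) := by
  set S := Submodule.span ℂ ((fun v : V => rankOne ℂ v v) '' Metric.sphere 0 1)
  have self_mem (v : V) : rankOne ℂ v v ∈ S := by
    obtain rfl | hv := eq_or_ne v 0
    · simp
    have hunit : rankOne ℂ ((‖v‖ : ℂ)⁻¹ • v) ((‖v‖ : ℂ)⁻¹ • v) ∈ S :=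
      Submodule.subset_span ⟨_, mem_sphere_zero_iff_norm.mpr (norm_smul_inv_norm hv), rfl⟩
    convert S.smul_mem ((‖v‖ : ℂ) ^ 2) hunit using 1
    have hv' : (‖v‖ : ℂ) ≠ 0 := by simpa using hv
    simp only [map_smul, map_smulₛₗ, smul_apply, map_inv₀, Complex.conj_ofReal]
    match_scalars
    field_simp
  have polarization : rankOne ℂ a b = (4 : ℂ)⁻¹ •
      (rankOne ℂ (a + b) (a + b) - rankOne ℂ (a - b) (a - b)
        + Complex.I • rankOne ℂ (a + Complex.I • b) (a + Complex.I • b)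
        - Complex.I • rankOne ℂ (a - Complex.I • b) (a - Complex.I • b)) := by
    simp only [map_add, map_sub, map_smul, map_smulₛₗ, Complex.conj_I, add_apply, sub_apply,
      smul_apply]
    match_scalars <;> ring_nf <;> norm_num [Complex.I_sq]
  rw [polarization]
  exact S.smul_mem _ (S.sub_mem (S.add_mem (S.sub_mem (self_mem _) (self_mem _))
    (S.smul_mem _ (self_mem _))) (S.smul_mem _ (self_mem _)))

theorem bilin_rankOne_mem (B : (V →L[ℂ] V) →ₗ[ℂ] (V →L[ℂ] V) →ₗ[ℂ] M) {N : Submodule ℂ M}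
    (hB : ∀ v w : V, ‖v‖ = 1 → ‖w‖ = 1 → B (rankOne ℂ v v) (rankOne ℂ w w) ∈ N) (a b c d : V) :
    B (rankOne ℂ a b) (rankOne ℂ c d) ∈ N := by
  have hmem := Submodule.apply_mem_map₂ B
    (rankOne_mem_span_rankOne_self a b) (rankOne_mem_span_rankOne_self c d)
  rw [Submodule.map₂_span_span] at hmem
  refine Submodule.span_le.mpr ?_ hmem
  rintro _ ⟨_, ⟨v, hv, rfl⟩, _, ⟨w, hw, rfl⟩, rfl⟩
  exact hB v w (mem_sphere_zero_iff_norm.mp hv) (mem_sphere_zero_iff_norm.mp hw)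

end Polarization

section VectorForm

variable {V : Type*} [NormedAddCommGroup V] [InnerProductSpace ℂ V]

/-- The bilinear extension `(x, y) ↦ ⟪ψ, y (x ψ)⟫` to all bounded operators of the decoherence
functional `d_ψ (p, q) = ⟪q ψ, p ψ⟫`. -/
def vectorForm (ψ : V) : (V →L[ℂ] V) →ₗ[ℂ] (V →L[ℂ] V) →ₗ[ℂ] ℂ :=
  LinearMap.mk₂ ℂ (fun x y => ⟪ψ, y (x ψ)⟫)
    (by simp) (by simp) (by simp) (by simp)

theorem vectorForm_apply (ψ : V) (x y : V →L[ℂ] V) : vectorForm ψ x y = ⟪ψ, y (x ψ)⟫ := rfl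

theorem vectorForm_rankOne (ψ φ e : V) :
    vectorForm ψ (rankOne ℂ e φ) (rankOne ℂ φ e) = ((‖⟪φ, ψ⟫‖ ^ 2 * ‖e‖ ^ 2 : ℝ) : ℂ) := by
  have hconj : ⟪φ, ψ⟫ * ⟪ψ, φ⟫ = (‖⟪φ, ψ⟫‖ : ℂ) ^ 2 := by
    rw [← inner_conj_symm ψ φ, Complex.mul_conj']
  simp only [vectorForm_apply, rankOne_apply, map_smul, inner_smul_right,
    inner_self_eq_norm_sq_to_K, Complex.coe_algebraMap]
  push_cast
  linear_combination (‖e‖ : ℂ) ^ 2 * hconj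

theorem isOrthoProj_rankOne_self [CompleteSpace V] {v : V} (hv : ‖v‖ = 1) :
    IsOrthoProj (rankOne ℂ v v) :=
  ⟨(isStarProjection_rankOne_self hv).1, (isStarProjection_rankOne_self hv).2⟩

theorem IsOrthoProj.vectorForm_eq [CompleteSpace V] {q : V →L[ℂ] V} (hq : IsOrthoProj q)
    (ψ : V) (p : V →L[ℂ] V) : vectorForm ψ p q = ⟪q ψ, p ψ⟫ :=
  (hq.2.isSymmetric ψ (p ψ)).symm

end VectorForm

section TensorProduct

variable {H K : Type u} [NormedAddCommGroup H] [InnerProductSpace ℂ H]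
  [NormedAddCommGroup K] [InnerProductSpace ℂ K]

theorem HilbertTensorProduct.clm_ext (J : HilbertTensorProduct H K) {F : Type*}
    [NormedAddCommGroup F] [NormedSpace ℂ F] {S T : K →L[ℂ] F}
    (h : ∀ a b, S (J.tmul a b) = T (J.tmul a b)) : S = T :=
  ContinuousLinearMap.ext_on J.dense_span (Set.forall_mem_range.mpr fun z => h z.1 z.2)

theorem HilbertTensorProduct.orthonormal_tmul (J : HilbertTensorProduct H K) {ι κ : Type*}
    {e : ι → H} {f : κ → H} (he : Orthonormal ℂ e) (hf : Orthonormal ℂ f) :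
    Orthonormal ℂ (fun i : ι × κ => J.tmul (e i.1) (f i.2)) := by
  classical
  rw [orthonormal_iff_ite] at he hf ⊢
  intro i j
  simp only [J.inner_tmul, he, hf, Prod.ext_iff, ite_and, mul_ite, mul_one, mul_zero]
  split_ifs <;> rfl

theorem HilbertTensorProduct.orthonormal_tmul_left (J : HilbertTensorProduct H K) {ι : Type*}
    {e : ι → H} (he : Orthonormal ℂ e) {φ : H} (hφ : ‖φ‖ = 1) :
    Orthonormal ℂ (fun i => J.tmul (e i) φ) :=
  have hφ' : Orthonormal ℂ fun _ : Unit => φ := orthonormal_subsingleton_iff.mpr fun _ => hφ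
  (J.orthonormal_tmul he hφ').comp (fun i => (i, ())) (Prod.mk_left_injective ())

theorem HilbertTensorProduct.orthonormal_tmul_right (J : HilbertTensorProduct H K) {ι : Type*}
    {e : ι → H} (he : Orthonormal ℂ e) {φ : H} (hφ : ‖φ‖ = 1) :
    Orthonormal ℂ (fun i => J.tmul φ (e i)) :=
  have hφ' : Orthonormal ℂ fun _ : Unit => φ := orthonormal_subsingleton_iff.mpr fun _ => hφ
  (J.orthonormal_tmul hφ' he).comp (fun i => ((), i)) (Prod.mk_right_injective ())

namespace OperatorTensor

/-- The operator tensor product `(x, y) ↦ x ⊗ y` as a bilinear map; bilinearity is not a field of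
`OperatorTensor` but follows from density of the algebraic tensor product. -/
def opBilin (J : OperatorTensor H K) : (H →L[ℂ] H) →ₗ[ℂ] (H →L[ℂ] H) →ₗ[ℂ] (K →L[ℂ] K) :=
  LinearMap.mk₂ ℂ J.op
    (fun _ _ _ => J.clm_ext fun _ _ => by simp [J.op_tmul])
    (fun _ _ _ => J.clm_ext fun _ _ => by simp [J.op_tmul])
    (fun _ _ _ => J.clm_ext fun _ _ => by simp [J.op_tmul])
    (fun _ _ _ => J.clm_ext fun _ _ => by simp [J.op_tmul])

theorem op_rankOne (J : OperatorTensor H K) (a b c d : H) :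
    J.op (rankOne ℂ a b) (rankOne ℂ c d) = rankOne ℂ (J.tmul a c) (J.tmul b d) :=
  J.clm_ext fun x y => by simp [J.op_tmul, J.inner_tmul, smul_smul, mul_comm]

end OperatorTensor

/-- The graph of `T ↦ tr (T X)`, with the trace computed in the Hilbert basis `b`: the pairs
`(T, z)` such that the diagonal of `T X` is summable with sum `z`. -/
def traceGraph {ι : Type*} (b : HilbertBasis ι ℂ K) (X : K →L[ℂ] K) :
    Submodule ℂ ((K →L[ℂ] K) × ℂ) where
  carrier := {Tz | HasSum (fun i => ⟪b i, (Tz.1 * X) (b i)⟫) Tz.2}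
  zero_mem' := by simp [hasSum_zero]
  add_mem' hS hT := by simpa [inner_add_right] using HasSum.add hS hT
  smul_mem' c _ hT := by simpa [inner_smul_right] using HasSum.mul_left c hT

variable [CompleteSpace H] {ψ : H}

theorem inner_tmul_eq_vectorForm_of_traceAlong {J : OperatorTensor H K} {ι : Type*}
    {b : HilbertBasis ι ℂ K} {X : K →L[ℂ] K}
    (hX : ∀ p q : H →L[ℂ] H, IsOrthoProj p → IsOrthoProj q →
      ⟪q ψ, p ψ⟫ = traceAlong b (J.op p q * X)) (u v x y : H) :
    ⟪J.tmul v y, X (J.tmul u x)⟫ = vectorForm ψ (rankOne ℂ u v) (rankOne ℂ x y) := by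
  let B : (H →L[ℂ] H) →ₗ[ℂ] (H →L[ℂ] H) →ₗ[ℂ] (K →L[ℂ] K) × ℂ :=
    J.opBilin.compr₂ (LinearMap.inl ℂ _ _) + (vectorForm ψ).compr₂ (LinearMap.inr ℂ _ _)
  have B_apply (p q : H →L[ℂ] H) : B p q = (J.op p q, vectorForm ψ p q) := by
    simp [B, OperatorTensor.opBilin]
  have hgraph : B (rankOne ℂ u v) (rankOne ℂ x y) ∈ traceGraph b X := by
    refine bilin_rankOne_mem B (fun v w hv hw => ?_) u v x y
    have hp := isOrthoProj_rankOne_self hv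
    have hq := isOrthoProj_rankOne_self hw
    rw [B_apply, hq.vectorForm_eq, hX _ _ hp hq, J.op_rankOne]
    exact (hasSum_inner_rankOne_mul b X _ _).summable.hasSum
  rw [B_apply, J.op_rankOne] at hgraph
  exact (hasSum_inner_rankOne_mul b X _ _).unique hgraph

theorem ExtendsDF.eq_vectorForm_rankOne {D : (H →L[ℂ] H) →ₗ[ℂ] (H →L[ℂ] H) →ₗ[ℂ] ℂ}
    (hD : ExtendsDF D fun p q => ⟪q ψ, p ψ⟫) (u v x y : H) :
    D (rankOne ℂ u v) (rankOne ℂ x y) = vectorForm ψ (rankOne ℂ u v) (rankOne ℂ x y) := by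
  have hmem : (D - vectorForm ψ) (rankOne ℂ u v) (rankOne ℂ x y) ∈ (⊥ : Submodule ℂ ℂ) := by
    refine bilin_rankOne_mem _ (fun v w hv hw => ?_) u v x y
    have hq := isOrthoProj_rankOne_self hw
    simp [hD _ _ (isOrthoProj_rankOne_self hv) hq, hq.vectorForm_eq]
  exact sub_eq_zero.mp hmem

theorem IsTraceClass.finiteDimensional_of_traceAlong_eq (hψ : ψ ≠ 0) {J : OperatorTensor H K}
    {ι : Type*} {b : HilbertBasis ι ℂ K} {X : K →L[ℂ] K} (hX : IsTraceClass X)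
    (htr : ∀ p q : H →L[ℂ] H, IsOrthoProj p → IsOrthoProj q →
      ⟪q ψ, p ψ⟫ = traceAlong b (J.op p q * X)) : FiniteDimensional ℂ H := by
  obtain ⟨C, hC⟩ := hX
  obtain ⟨φ, hφ, hφψ⟩ := exists_norm_eq_one_inner_ne_zero (𝕜 := ℂ) hψ
  refine finiteDimensional_of_orthonormal_bound (𝕜 := ℂ) (C := C)
    (pow_pos (norm_pos_iff.mpr hφψ) 2) fun n e he => ?_
  calc n * ‖⟪φ, ψ⟫‖ ^ 2 = ∑ i, ‖⟪J.tmul φ (e i), X (J.tmul (e i) φ)⟫‖ := by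
        simp [inner_tmul_eq_vectorForm_of_traceAlong htr, vectorForm_rankOne, he.norm_eq_one]
    _ ≤ C := hC n _ _ (J.orthonormal_tmul_right he hφ) (J.orthonormal_tmul_left he hφ)

theorem IsTensorBounded.finiteDimensional (hψ : ψ ≠ 0) {J : OperatorTensor H K}
    (hJ : IsTensorBounded J fun p q => ⟪q ψ, p ψ⟫) : FiniteDimensional ℂ H := by
  obtain ⟨D, -, hD, β, hβ, C, hC⟩ := hJ
  obtain ⟨φ, hφ, hφψ⟩ := exists_norm_eq_one_inner_ne_zero (𝕜 := ℂ) hψ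
  refine finiteDimensional_of_orthonormal_bound (𝕜 := ℂ) (C := |C|)
    (pow_pos (norm_pos_iff.mpr hφψ) 2) fun n e he => ?_
  have hmem (i) : J.op (rankOne ℂ (e i) φ) (rankOne ℂ φ (e i)) ∈ J.compactSpan :=
    Submodule.subset_span
      ⟨_, _, isCompactOperator_rankOne _ _, isCompactOperator_rankOne _ _, rfl⟩
  let S : J.compactSpan := ∑ i, ⟨_, hmem i⟩
  have hβS : β S = ((n * ‖⟪φ, ψ⟫‖ ^ 2 : ℝ) : ℂ) := by
    simp [S, hβ _ _ (isCompactOperator_rankOne _ _) (isCompactOperator_rankOne _ _),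
      hD.eq_vectorForm_rankOne, vectorForm_rankOne, he.norm_eq_one]
  have hS : ‖(S : K →L[ℂ] K)‖ ≤ 1 := by
    simp only [S, Submodule.coe_sum, J.op_rankOne]
    exact norm_sum_rankOne_le_one (J.orthonormal_tmul_left he hφ) (J.orthonormal_tmul_right he hφ)
  calc n * ‖⟪φ, ψ⟫‖ ^ 2 = ‖β S‖ := by rw [hβS, Complex.norm_of_nonneg (by positivity)]
    _ ≤ C * ‖(S : K →L[ℂ] K)‖ := hC S
    _ ≤ |C| * 1 := mul_le_mul (le_abs_self C) hS (norm_nonneg _) (abs_nonneg C)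
    _ = |C| := mul_one _

theorem stmt_8_general (hinf : ¬ FiniteDimensional ℂ H) (hψ : ψ ≠ 0) (J : OperatorTensor H K)
    {ι : Type*} (b : HilbertBasis ι ℂ K) :
    (¬ ∃ X : K →L[ℂ] K, IsTraceClass X ∧
        ∀ p q : H →L[ℂ] H, IsOrthoProj p → IsOrthoProj q →
          ⟪q ψ, p ψ⟫ = traceAlong b (J.op p q * X)) ∧
      ¬ IsTensorBounded J fun p q : H →L[ℂ] H => ⟪q ψ, p ψ⟫ :=
  ⟨fun ⟨_, hX, htr⟩ => hinf (hX.finiteDimensional_of_traceAlong_eq hψ htr),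
    fun hJ => hinf (hJ.finiteDimensional hψ)⟩

end TensorProduct

/-- For a unit vector `ψ` in a separable infinite dimensional
Hilbert space, the decoherence functional `d_ψ(p,q) = ⟨pψ, qψ⟩` is not
representable by any trace class operator on `𝔥 ⊗ 𝔥`; equivalently, `d_ψ` is
not tensor bounded. -/
theorem stmt_8 [TopologicalSpace.SeparableSpace E] (hinf : ¬ FiniteDimensional ℂ E)
    (ψ : E) (hψ : ‖ψ‖ = 1)
    (J : OperatorTensor E G) {ι : Type u} (bG : HilbertBasis ι ℂ G) :
    (¬ ∃ X : G →L[ℂ] G, IsTraceClass X ∧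
        ∀ p q : E →L[ℂ] E, IsOrthoProj p → IsOrthoProj q →
          (⟪q ψ, p ψ⟫ : ℂ) = traceAlong bG (J.op p q * X)) ∧
    ¬ IsTensorBounded J (fun p q : E →L[ℂ] E => ⟪q ψ, p ψ⟫) :=
  stmt_8_general hinf (norm_ne_zero_iff.mp (hψ ▸ one_ne_zero)) J bG
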